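/- Let d ≥ 1 be an integer and φ₁, φ₂ : ℝ^d → [0,∞) be bounded measurable functions with φ₁(x) ≤ φ₂(x) for all x. If u₁ and u₂ are mild solutions of ∂_t u = (1/2)Δu - u² with initial data φ₁ and φ₂ respectively, then u₁(t,x) ≤ u₂(t,x) for all t > 0 and x ∈ ℝ^d. -/

import Mathlib

/-!
The difference of two mild solutions is controlled after trading the generator `½Δ` for `½Δ - K`.
By positivity both solutions stay below a common bound `C` of the initial data. Take `K = 2C` and
`F(v) = Kv - v²`, which is nondecreasing and `K`-Lipschitz on `[0, C]`. Averaging the mild equation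
against `K e^{-Ks} P_s` and using the Chapman–Kolmogorov identity (`heatE_conv`) and Fubini turns it
into `u(t) = e^{-Kt} P_t φ + ∫₀ᵗ e^{-Ks} P_s F(u(t-s)) ds` (`mild_weighted`), in which every term is
monotone. Hence `W = (u₁ - u₂)⁺` satisfies `W(t) ≤ ∫₀ᵗ K e^{-Ks} P_s W(t-s) ds` (`mild_sub_le`).
As `P_s 1 = 1`, the supremum `m` of `W` over `(0, T] × ℝ^d` satisfies `m ≤ (1 - e^{-KT}) m`; it is
finite, so it vanishes.

All integrals are taken in `[0,∞]`, so no integrability conditions arise; finiteness is only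
needed to cancel common terms.
-/

open MeasureTheory Filter Set Metric
open scoped ENNReal

/-- The `d`-dimensional heat kernel `p_t(x,y) = (2πt)^{-d/2} exp(-‖x-y‖²/(2t))`. -/
noncomputable def heatKernel (d : ℕ) (t : ℝ) (x y : EuclideanSpace ℝ (Fin d)) : ℝ :=
  (2 * Real.pi * t) ^ (-(d : ℝ) / 2) * Real.exp (-‖x - y‖ ^ 2 / (2 * t))

/-- `u : (0,∞) × ℝ^d → [0,∞)` is a mild solution of `∂ₜu = (1/2)Δu - u²` with initial
data `φ` if it is measurable, nonnegative, and satisfies for all `t > 0`, `x ∈ ℝ^d`: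
`u(t,x) + ∫₀ᵗ ∫ p_s(x,y) u(t-s,y)² dy ds = ∫ p_t(x,y) φ(y) dy` (equality in `[0,∞]`). -/
def IsMildSolution (d : ℕ) (φ : EuclideanSpace ℝ (Fin d) → ℝ)
    (u : ℝ → EuclideanSpace ℝ (Fin d) → ℝ) : Prop :=
  Measurable (Function.uncurry u) ∧
  (∀ t x, 0 ≤ u t x) ∧
  ∀ t x, 0 < t →
    ENNReal.ofReal (u t x) +
        (∫⁻ s in Set.Ioo (0 : ℝ) t, ∫⁻ y,
          ENNReal.ofReal (heatKernel d s x y * u (t - s) y ^ 2)) =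
      ∫⁻ y, ENNReal.ofReal (heatKernel d t x y * φ y)

/-! ### Heat kernel and heat semigroup -/

/-- The heat kernel with values in `[0,∞]`. It is meaningful only for `s > 0`. -/
noncomputable def heatE {d : ℕ} (s : ℝ) (x y : EuclideanSpace ℝ (Fin d)) : ℝ≥0∞ :=
  ENNReal.ofReal (heatKernel d s x y)

lemma heatKernel_nonneg {d : ℕ} {s : ℝ} (hs : 0 < s) (x y : EuclideanSpace ℝ (Fin d)) :
    0 ≤ heatKernel d s x y := by
  unfold heatKernel; positivity

lemma measurable_heatE {d : ℕ} : Measurable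
    (fun p : ℝ × EuclideanSpace ℝ (Fin d) × EuclideanSpace ℝ (Fin d) =>
      heatE p.1 p.2.1 p.2.2) := by
  unfold heatE heatKernel
  fun_prop

/-- The heat kernel is a probability density in its second variable. -/
lemma lintegral_gauss {d : ℕ} {s : ℝ} (hs : 0 < s) (c : EuclideanSpace ℝ (Fin d)) :
    ∫⁻ y : EuclideanSpace ℝ (Fin d), heatE s c y = 1 := by
  have hb : 0 < 1 / (2 * s) := by positivity
  have h1 := GaussianFourier.integral_rexp_neg_mul_sq_norm (V := EuclideanSpace ℝ (Fin d)) hb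
  have hval : ∫ y : EuclideanSpace ℝ (Fin d), heatKernel d s 0 y = 1 := by
    unfold heatKernel
    rw [integral_const_mul]
    have : ∀ y : EuclideanSpace ℝ (Fin d), -‖0 - y‖ ^ 2 / (2 * s) = -(1 / (2 * s)) * ‖y‖ ^ 2 := by
      intro y; rw [zero_sub, norm_neg]; ring
    simp_rw [this]
    rw [h1, finrank_euclideanSpace_fin]
    have : Real.pi / (1 / (2 * s)) = 2 * Real.pi * s := by field_simp
    rw [this, ← Real.rpow_add (by positivity)]
    rw [neg_div, neg_add_cancel, Real.rpow_zero]
  have hint : Integrable (fun y : EuclideanSpace ℝ (Fin d) => heatKernel d s 0 y) := by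
    by_contra h
    rw [integral_undef h] at hval
    exact zero_ne_one hval
  have h0 : ∫⁻ y : EuclideanSpace ℝ (Fin d), heatE s 0 y = 1 := by
    unfold heatE
    rw [← ofReal_integral_eq_lintegral_ofReal hint
      (Eventually.of_forall fun y => heatKernel_nonneg hs _ _), hval, ENNReal.ofReal_one]
  rw [← h0, ← lintegral_sub_right_eq_self (fun y => heatE s 0 y) c]
  refine lintegral_congr fun y => ?_
  simp only [heatE, heatKernel, zero_sub, norm_neg, norm_sub_rev c y]

/-- The Chapman–Kolmogorov identity. Completing the square in `y` exhibits the integrand as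
`p_{s+r}(x,z)` times a Gaussian density in `y` of variance `sr/(s+r)` centred at
`(r x + s z)/(s + r)`. -/
lemma heatE_conv {d : ℕ} {s r : ℝ} (hs : 0 < s) (hr : 0 < r) (x z : EuclideanSpace ℝ (Fin d)) :
    ∫⁻ y, heatE s x y * heatE r y z = heatE (s + r) x z := by
  set c : EuclideanSpace ℝ (Fin d) := (r / (s + r)) • x + (s / (s + r)) • z with hc
  have hsr : 0 < s + r := by positivity
  have hσ : 0 < s * r / (s + r) := by positivity
  have key : ∀ y, heatE s x y * heatE r y z
      = heatE (s + r) x z * heatE (s * r / (s + r)) c y := by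
    intro y
    unfold heatE
    rw [← ENNReal.ofReal_mul (heatKernel_nonneg hs _ _),
      ← ENNReal.ofReal_mul (heatKernel_nonneg hsr _ _)]
    congr 1
    unfold heatKernel
    rw [mul_mul_mul_comm, mul_mul_mul_comm ((2 * Real.pi * (s + r)) ^ _), ← Real.exp_add,
      ← Real.exp_add, ← Real.mul_rpow (by positivity) (by positivity),
      ← Real.mul_rpow (by positivity) (by positivity)]
    congr 2
    · field_simp
    · have e1 : c - y = (r / (s + r)) • (x - y) - (s / (s + r)) • (y - z) := by
        have : y = (r / (s + r)) • y + (s / (s + r)) • y := by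
          rw [← add_smul, ← add_div, add_comm r s, div_self hsr.ne', one_smul]
        rw [hc]
        nth_rewrite 1 [this]
        module
      have e2 : x - z = (x - y) + (y - z) := by abel
      rw [e1, e2]
      generalize x - y = p
      generalize y - z = q
      rw [norm_sub_sq_real, norm_add_sq_real, norm_smul, norm_smul, inner_smul_left,
        inner_smul_right, Real.norm_of_nonneg (by positivity), Real.norm_of_nonneg (by positivity)]
      simp only [conj_trivial]
      field_simp
      ring
  simp_rw [key]
  rw [lintegral_const_mul, lintegral_gauss hσ, mul_one]
  exact measurable_heatE.comp (by fun_prop : Measurable fun y : EuclideanSpace ℝ (Fin d) =>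
    ((s * r / (s + r)), c, y))

/-- The heat semigroup `P_s f (x) = ∫ p_s(x,y) f(y) dy` on `[0,∞]`-valued functions. -/
noncomputable def heatOp {d : ℕ} (s : ℝ) (f : EuclideanSpace ℝ (Fin d) → ℝ≥0∞)
    (x : EuclideanSpace ℝ (Fin d)) : ℝ≥0∞ :=
  ∫⁻ y, heatE s x y * f y

@[fun_prop]
lemma measurable_heatE' {d : ℕ} {α : Type*} [MeasurableSpace α] {s : α → ℝ}
    {x y : α → EuclideanSpace ℝ (Fin d)} (hs : Measurable s) (hx : Measurable x)
    (hy : Measurable y) : Measurable fun a => heatE (s a) (x a) (y a) :=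
  measurable_heatE.comp (hs.prodMk (hx.prodMk hy))

lemma measurable_slice {d : ℕ} {F : ℝ → EuclideanSpace ℝ (Fin d) → ℝ≥0∞}
    (hF : Measurable (Function.uncurry F)) (s : ℝ) : Measurable (F s) :=
  hF.comp (measurable_const.prodMk measurable_id)

lemma measurable_heatOp {d : ℕ} {F : ℝ → EuclideanSpace ℝ (Fin d) → ℝ≥0∞}
    (hF : Measurable (Function.uncurry F)) {α : Type*} [MeasurableSpace α] {s r : α → ℝ}
    {x : α → EuclideanSpace ℝ (Fin d)} (hs : Measurable s) (hr : Measurable r)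
    (hx : Measurable x) : Measurable fun a => heatOp (s a) (F (r a)) (x a) := by
  unfold heatOp
  refine Measurable.lintegral_prod_right'
    (f := fun p : α × EuclideanSpace ℝ (Fin d) => heatE (s p.1) (x p.1) p.2 * F (r p.1) p.2) ?_
  have : Measurable fun p : α × EuclideanSpace ℝ (Fin d) => F (r p.1) p.2 :=
    hF.comp ((hr.comp measurable_fst).prodMk measurable_snd)
  fun_prop

lemma heatOp_const {d : ℕ} {s : ℝ} (hs : 0 < s) (m : ℝ≥0∞) (x : EuclideanSpace ℝ (Fin d)) :
    heatOp s (fun _ => m) x = m := by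
  unfold heatOp
  rw [lintegral_mul_const _ (by fun_prop), lintegral_gauss hs, one_mul]

lemma heatOp_mono {d : ℕ} {s : ℝ} {f g : EuclideanSpace ℝ (Fin d) → ℝ≥0∞}
    (h : ∀ y, f y ≤ g y) (x : EuclideanSpace ℝ (Fin d)) : heatOp s f x ≤ heatOp s g x :=
  lintegral_mono fun y => mul_le_mul_right (h y) _

lemma heatOp_add {d : ℕ} {s : ℝ} {f g : EuclideanSpace ℝ (Fin d) → ℝ≥0∞}
    (hf : Measurable f) (x : EuclideanSpace ℝ (Fin d)) :
    heatOp s (fun y => f y + g y) x = heatOp s f x + heatOp s g x := by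
  unfold heatOp
  rw [← lintegral_add_left (by fun_prop)]
  simp only [mul_add]

lemma heatOp_comp {d : ℕ} {s r : ℝ} (hs : 0 < s) (hr : 0 < r)
    {f : EuclideanSpace ℝ (Fin d) → ℝ≥0∞} (hf : Measurable f) (x : EuclideanSpace ℝ (Fin d)) :
    heatOp s (heatOp r f) x = heatOp (s + r) f x := by
  unfold heatOp
  simp_rw [← heatE_conv hs hr]
  have h1 : ∀ y, heatE s x y * ∫⁻ z, heatE r y z * f z
      = ∫⁻ z, heatE s x y * heatE r y z * f z := fun y => by
    rw [← lintegral_const_mul _ (by fun_prop)]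
    simp only [mul_assoc]
  simp_rw [h1]
  rw [lintegral_lintegral_swap (by unfold Function.uncurry; fun_prop)]
  refine lintegral_congr fun z => ?_
  rw [lintegral_mul_const _ (by fun_prop)]

/-! ### The Duhamel operator -/

/-- The weighted Duhamel operator `(t, x) ↦ ∫₀ᵗ w(s) P_s(F(t-s))(x) ds`. -/
noncomputable def duhamel {d : ℕ} (w : ℝ → ℝ≥0∞) (F : ℝ → EuclideanSpace ℝ (Fin d) → ℝ≥0∞)
    (t : ℝ) (x : EuclideanSpace ℝ (Fin d)) : ℝ≥0∞ :=
  ∫⁻ s in Ioo 0 t, w s * heatOp s (F (t - s)) x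

lemma measurable_heatOp_slice {d : ℕ} {F : ℝ → EuclideanSpace ℝ (Fin d) → ℝ≥0∞}
    (hF : Measurable (Function.uncurry F)) (t : ℝ) (x : EuclideanSpace ℝ (Fin d)) :
    Measurable fun s => heatOp s (F (t - s)) x :=
  measurable_heatOp hF measurable_id (by fun_prop) measurable_const

lemma duhamel_add {d : ℕ} {w : ℝ → ℝ≥0∞} (hw : Measurable w)
    {F G : ℝ → EuclideanSpace ℝ (Fin d) → ℝ≥0∞}
    (hF : Measurable (Function.uncurry F))
    (t : ℝ) (x : EuclideanSpace ℝ (Fin d)) :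
    duhamel w (fun s y => F s y + G s y) t x = duhamel w F t x + duhamel w G t x := by
  unfold duhamel
  rw [← lintegral_add_left (by
    have := measurable_heatOp_slice hF t x
    fun_prop)]
  refine lintegral_congr fun s => ?_
  have hadd := heatOp_add (s := s) (g := G (t - s)) (measurable_slice hF (t - s)) x
  rw [hadd, mul_add]

lemma duhamel_add_weight {d : ℕ} {w v : ℝ → ℝ≥0∞} (hw : Measurable w)
    {F : ℝ → EuclideanSpace ℝ (Fin d) → ℝ≥0∞}
    (hF : Measurable (Function.uncurry F))
    (t : ℝ) (x : EuclideanSpace ℝ (Fin d)) :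
    duhamel (fun s => w s + v s) F t x = duhamel w F t x + duhamel v F t x := by
  unfold duhamel
  rw [← lintegral_add_left (by
    have := measurable_heatOp_slice hF t x
    fun_prop)]
  simp only [add_mul]

lemma duhamel_mono {d : ℕ} {w : ℝ → ℝ≥0∞}
    {F G : ℝ → EuclideanSpace ℝ (Fin d) → ℝ≥0∞} {t : ℝ}
    (h : ∀ s, 0 < s → s < t → ∀ y, F s y ≤ G s y) (x : EuclideanSpace ℝ (Fin d)) :
    duhamel w F t x ≤ duhamel w G t x :=
  setLIntegral_mono' measurableSet_Ioo fun s hs =>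
    mul_le_mul_right (heatOp_mono (h _ (by linarith [hs.2]) (by linarith [hs.1])) x) _

/-- Fubini on the triangle `0 < s < σ < t`. -/
lemma lintegral_triangle {k q : ℝ → ℝ≥0∞} (hk : Measurable k) (hq : Measurable q) (t : ℝ) :
    ∫⁻ s in Ioo 0 t, k s * ∫⁻ σ in Ioo s t, q σ
      = ∫⁻ σ in Ioo 0 t, (∫⁻ s in Ioo 0 σ, k s) * q σ := by
  have hT : MeasurableSet {p : ℝ × ℝ | 0 < p.1 ∧ p.1 < p.2 ∧ p.2 < t} :=
    (measurableSet_lt measurable_const measurable_fst).inter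
      ((measurableSet_lt measurable_fst measurable_snd).inter
        (measurableSet_lt measurable_snd measurable_const))
  have h1 : ∫⁻ s in Ioo 0 t, k s * ∫⁻ σ in Ioo s t, q σ
      = ∫⁻ s, ∫⁻ σ, {p : ℝ × ℝ | 0 < p.1 ∧ p.1 < p.2 ∧ p.2 < t}.indicator
          (fun p => k p.1 * q p.2) (s, σ) := by
    rw [← lintegral_indicator measurableSet_Ioo]
    refine lintegral_congr fun s => ?_
    by_cases hs : s ∈ Ioo 0 t
    · rw [indicator_of_mem hs, ← lintegral_const_mul _ hq, ← lintegral_indicator measurableSet_Ioo]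
      refine lintegral_congr fun σ => ?_
      simp [indicator, hs.1]
    · rw [indicator_of_notMem hs, eq_comm, ← lintegral_zero (μ := (volume : Measure ℝ))]
      refine lintegral_congr fun σ => indicator_of_notMem ?_ _
      rintro ⟨h1, h2, h3⟩
      exact hs ⟨h1, h2.trans h3⟩
  have h2 : ∫⁻ σ in Ioo 0 t, (∫⁻ s in Ioo 0 σ, k s) * q σ
      = ∫⁻ σ, ∫⁻ s, {p : ℝ × ℝ | 0 < p.1 ∧ p.1 < p.2 ∧ p.2 < t}.indicator
          (fun p => k p.1 * q p.2) (s, σ) := by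
    rw [← lintegral_indicator measurableSet_Ioo]
    refine lintegral_congr fun σ => ?_
    by_cases hs : σ ∈ Ioo 0 t
    · rw [indicator_of_mem hs, ← lintegral_mul_const _ hk, ← lintegral_indicator measurableSet_Ioo]
      refine lintegral_congr fun s => ?_
      simp [indicator, hs.2]
    · rw [indicator_of_notMem hs, eq_comm, ← lintegral_zero (μ := (volume : Measure ℝ))]
      refine lintegral_congr fun s => indicator_of_notMem ?_ _
      rintro ⟨h1, h2, h3⟩
      exact hs ⟨h1.trans h2, h3⟩
  rw [h1, h2, lintegral_lintegral_swap]
  exact (Measurable.indicator (by fun_prop) hT).aemeasurable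

/-- Applying `P_s` to the unweighted Duhamel term at time `t - s` shifts its time variable by `s`,
by the semigroup property. -/
lemma heatOp_duhamel {d : ℕ} {F : ℝ → EuclideanSpace ℝ (Fin d) → ℝ≥0∞}
    (hF : Measurable (Function.uncurry F)) {s t : ℝ} (hs : 0 < s)
    (x : EuclideanSpace ℝ (Fin d)) :
    heatOp s (duhamel (fun _ => 1) F (t - s)) x = ∫⁻ σ in Ioo s t, heatOp σ (F (t - σ)) x := by
  have h1 : heatOp s (duhamel (fun _ => 1) F (t - s)) x
      = ∫⁻ r in Ioo 0 (t - s), heatOp s (heatOp r (F (t - s - r))) x := by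
    unfold duhamel
    simp only [one_mul]
    have hm : Measurable fun p : EuclideanSpace ℝ (Fin d) × ℝ =>
        heatOp p.2 (F (t - s - p.2)) p.1 :=
      measurable_heatOp hF measurable_snd (by fun_prop) measurable_fst
    have hmul : ∀ y, heatE s x y * ∫⁻ r in Ioo 0 (t - s), heatOp r (F (t - s - r)) y
        = ∫⁻ r in Ioo 0 (t - s), heatE s x y * heatOp r (F (t - s - r)) y := fun y =>
      (lintegral_const_mul _ (hm.comp (measurable_const.prodMk measurable_id))).symm
    conv_lhs => rw [heatOp]
    simp_rw [hmul]
    rw [lintegral_lintegral_swap]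
    · rfl
    · exact ((by fun_prop : Measurable fun p : EuclideanSpace ℝ (Fin d) × ℝ =>
        heatE s x p.1).mul hm).aemeasurable
  have h2 : ∀ r ∈ Ioo 0 (t - s), heatOp s (heatOp r (F (t - s - r))) x
      = heatOp (r + s) (F (t - (r + s))) x := fun r hr => by
    rw [heatOp_comp hs hr.1 (measurable_slice hF _), add_comm r s,
      sub_sub]
  rw [h1, setLIntegral_congr_fun measurableSet_Ioo h2, ← lintegral_indicator measurableSet_Ioo,
    ← lintegral_indicator measurableSet_Ioo,
    ← lintegral_add_right_eq_self ((Ioo s t).indicator _) s]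
  refine lintegral_congr fun r => ?_
  have : r ∈ Ioo 0 (t - s) ↔ r + s ∈ Ioo s t := by
    simp only [mem_Ioo, lt_add_iff_pos_left, lt_sub_iff_add_lt]
  by_cases hr : r ∈ Ioo 0 (t - s)
  · rw [indicator_of_mem hr, indicator_of_mem (this.1 hr)]
  · rw [indicator_of_notMem hr, indicator_of_notMem (mt this.2 hr)]

/-! ### Exponential weights and variation of constants -/

/-- The exponential weight `e^{-Ks}`. -/
noncomputable def expW (K s : ℝ) : ℝ≥0∞ := ENNReal.ofReal (Real.exp (-K * s))

/-- The complementary weight `1 - e^{-Ks}`, i.e. `∫₀ˢ K e^{-Kr} dr` for `s ≥ 0`. -/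
noncomputable def expCDF (K s : ℝ) : ℝ≥0∞ := ENNReal.ofReal (1 - Real.exp (-K * s))

@[fun_prop]
lemma measurable_expW (K : ℝ) : Measurable (expW K) := by unfold expW; fun_prop

lemma expW_add_expCDF {K s : ℝ} (hK : 0 < K) (hs : 0 ≤ s) : expW K s + expCDF K s = 1 := by
  unfold expW expCDF
  rw [← ENNReal.ofReal_add (Real.exp_pos _).le]
  · simp
  · have : Real.exp (-K * s) ≤ 1 := Real.exp_le_one_iff.2 (by nlinarith)
    linarith

lemma lintegral_expW {K σ : ℝ} (hK : 0 < K) (hσ : 0 ≤ σ) :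
    ∫⁻ s in Ioo 0 σ, ENNReal.ofReal K * expW K s = expCDF K σ := by
  have h0 : ∫ s in (0 : ℝ)..σ, K * Real.exp (-K * s) = 1 - Real.exp (-K * σ) := by
    rw [intervalIntegral.integral_eq_sub_of_hasDerivAt (f := fun s => -Real.exp (-K * s))]
    · rw [mul_zero, Real.exp_zero]
      ring
    · intro s _
      have h := (((hasDerivAt_id s).const_mul (-K)).exp).neg
      have e : K * Real.exp (-K * s) = -(Real.exp (-K * id s) * (-K * 1)) := by
        rw [id]
        ring
      rw [e]
      exact h
    · exact Continuous.intervalIntegrable (by fun_prop) _ _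
  unfold expW expCDF
  rw [← h0, intervalIntegral.integral_of_le hσ, integral_Ioc_eq_integral_Ioo,
    ofReal_integral_eq_lintegral_ofReal]
  · simp_rw [ENNReal.ofReal_mul hK.le]
  · have : IntervalIntegrable (fun s => K * Real.exp (-K * s)) volume 0 σ :=
      Continuous.intervalIntegrable (by fun_prop) _ _
    exact (intervalIntegrable_iff_integrableOn_Ioo_of_le hσ).1 this
  · exact Eventually.of_forall fun s => by positivity

lemma duhamel_congr_weight {d : ℕ} {w v : ℝ → ℝ≥0∞}
    {F : ℝ → EuclideanSpace ℝ (Fin d) → ℝ≥0∞} {t : ℝ} (h : ∀ s, 0 < s → w s = v s)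
    (x : EuclideanSpace ℝ (Fin d)) : duhamel w F t x = duhamel v F t x :=
  setLIntegral_congr_fun measurableSet_Ioo fun s hs => by rw [h s hs.1]

/-- The integrated equation `U + ∫₀ᵗ P_s G(t-s) ds = P_t Φ`, averaged over `0 < s < t` after applying
`P_s` at time `t - s`, with weight `K e^{-Ks}`. -/
lemma mild_average {d : ℕ} {K : ℝ} (hK : 0 < K)
    {U G : ℝ → EuclideanSpace ℝ (Fin d) → ℝ≥0∞} {Φ : EuclideanSpace ℝ (Fin d) → ℝ≥0∞}
    (hUm : Measurable (Function.uncurry U)) (hGm : Measurable (Function.uncurry G))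
    (hΦ : Measurable Φ)
    (hU : ∀ t x, 0 < t → U t x + duhamel (fun _ => 1) G t x = heatOp t Φ x)
    {t : ℝ} (ht : 0 < t) (x : EuclideanSpace ℝ (Fin d)) :
    duhamel (fun s => ENNReal.ofReal K * expW K s) U t x + duhamel (expCDF K) G t x
      = expCDF K t * heatOp t Φ x := by
  have hk : Measurable fun s => ENNReal.ofReal K * expW K s := by fun_prop
  have hq := measurable_heatOp_slice hGm t x
  have hq' := measurable_heatOp_slice hUm t x
  have h1 : duhamel (expCDF K) G t x
      = ∫⁻ s in Ioo 0 t, (ENNReal.ofReal K * expW K s) *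
          ∫⁻ σ in Ioo s t, heatOp σ (G (t - σ)) x := by
    rw [lintegral_triangle hk hq]
    exact setLIntegral_congr_fun measurableSet_Ioo fun s hs => by
      rw [lintegral_expW hK hs.1.le]
  rw [h1, duhamel, ← lintegral_add_left (by fun_prop), ← lintegral_expW hK ht.le,
    ← lintegral_mul_const _ hk]
  refine setLIntegral_congr_fun measurableSet_Ioo fun s hs => ?_
  have hts : 0 < t - s := sub_pos.2 hs.2
  have hfun : (fun y => U (t - s) y + duhamel (fun _ => 1) G (t - s) y) = heatOp (t - s) Φ :=
    funext fun y => hU _ y hts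
  rw [← mul_add, ← heatOp_duhamel hGm hs.1, ← heatOp_add (measurable_slice hUm _), hfun,
    heatOp_comp hs.1 hts hΦ, add_sub_cancel]

/-- The variation-of-constants formula for the equation with `K U` added to both sides: the mild
form for the generator `½Δ` with source `-G` implies the one for `½Δ - K` with source `K U - G`. Subtractions are avoided by moving `G` to the left-hand side. -/
lemma mild_weighted {d : ℕ} {K : ℝ} (hK : 0 < K)
    {U G : ℝ → EuclideanSpace ℝ (Fin d) → ℝ≥0∞} {Φ : EuclideanSpace ℝ (Fin d) → ℝ≥0∞}
    (hUm : Measurable (Function.uncurry U)) (hGm : Measurable (Function.uncurry G))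
    (hΦ : Measurable Φ) (hfin : ∀ t x, 0 < t → heatOp t Φ x ≠ ∞)
    (hU : ∀ t x, 0 < t → U t x + duhamel (fun _ => 1) G t x = heatOp t Φ x)
    {t : ℝ} (ht : 0 < t) (x : EuclideanSpace ℝ (Fin d)) :
    U t x + duhamel (expW K) G t x
      = expW K t * heatOp t Φ x + duhamel (fun s => ENNReal.ofReal K * expW K s) U t x := by
  have h1 := mild_average hK hUm hGm hΦ hU ht x
  have h2 : duhamel (fun _ => 1) G t x = duhamel (expW K) G t x + duhamel (expCDF K) G t x := by
    rw [← duhamel_add_weight (by fun_prop) hGm]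
    exact duhamel_congr_weight (fun s hs => (expW_add_expCDF hK hs.le).symm) x
  have h3 := hU t x ht
  have hne : duhamel (expCDF K) G t x ≠ ∞ := by
    refine ne_top_of_le_ne_top (hfin t x ht) ?_
    rw [← h3, h2]
    exact le_add_left le_add_self
  rw [← ENNReal.add_left_inj hne, add_assoc, ← h2, h3, add_assoc, h1, ← add_mul,
    expW_add_expCDF hK ht.le, one_mul]

lemma duhamel_const_mul {d : ℕ} {c : ℝ≥0∞} {w : ℝ → ℝ≥0∞}
    {F : ℝ → EuclideanSpace ℝ (Fin d) → ℝ≥0∞}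
    (hF : Measurable (Function.uncurry F)) (t : ℝ) (x : EuclideanSpace ℝ (Fin d)) :
    duhamel w (fun s y => c * F s y) t x = duhamel (fun s => c * w s) F t x := by
  unfold duhamel
  refine lintegral_congr fun s => ?_
  have : Measurable (F (t - s)) := measurable_slice hF _
  have h : heatOp s (fun y => c * F (t - s) y) x = c * heatOp s (F (t - s)) x := by
    unfold heatOp
    rw [← lintegral_const_mul _ (by fun_prop)]
    exact lintegral_congr fun y => mul_left_comm _ _ _
  rw [h, mul_left_comm, mul_assoc]

lemma duhamel_weight_const {d : ℕ} {K : ℝ} (hK : 0 < K) (m : ℝ≥0∞) {t : ℝ} (ht : 0 < t)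
    (x : EuclideanSpace ℝ (Fin d)) :
    duhamel (fun s => ENNReal.ofReal K * expW K s) (fun _ _ => m) t x = expCDF K t * m := by
  rw [← lintegral_expW hK ht.le, ← lintegral_mul_const _ (by fun_prop)]
  exact setLIntegral_congr_fun measurableSet_Ioo fun s hs => by rw [heatOp_const hs.1]

/-! ### Comparison -/

/-- The function `v ↦ 2Cv - v²` is nondecreasing and `2C`-Lipschitz on `[0, C]`, so that
`F(a) ≤ F(b) + 2C (a - b)⁺`; written without subtraction of the squares. Here `ENNReal.ofReal`
of `a - b` is the positive part of `a - b`. -/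
lemma reaction_le {a b C : ℝ} (ha : 0 ≤ a) (hb : 0 ≤ b) (haC : a ≤ C) (hbC : b ≤ C) :
    ENNReal.ofReal (2 * C) * ENNReal.ofReal a + ENNReal.ofReal b ^ 2 ≤
      ENNReal.ofReal a ^ 2 + ENNReal.ofReal (2 * C) * ENNReal.ofReal b
        + ENNReal.ofReal (2 * C) * ENNReal.ofReal (a - b) := by
  have hC : 0 ≤ 2 * C := by linarith
  have h : 2 * C * a + b ^ 2 ≤ a ^ 2 + 2 * C * b + 2 * C * max (a - b) 0 := by
    rcases le_total a b with h | h
    · rw [max_eq_right (by linarith)]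
      nlinarith [mul_nonneg (sub_nonneg.2 h) (by linarith : 0 ≤ 2 * C - a - b)]
    · rw [max_eq_left (by linarith)]
      nlinarith
  have hmax : ENNReal.ofReal (a - b) = ENNReal.ofReal (max (a - b) 0) := by
    rcases le_total (a - b) 0 with h | h
    · rw [max_eq_right h, ENNReal.ofReal_of_nonpos h, ENNReal.ofReal_zero]
    · rw [max_eq_left h]
  have hm : 0 ≤ max (a - b) 0 := le_max_right _ _
  rw [hmax, ← ENNReal.ofReal_pow ha, ← ENNReal.ofReal_pow hb, ← ENNReal.ofReal_mul hC,
    ← ENNReal.ofReal_mul hC, ← ENNReal.ofReal_mul hC, ← ENNReal.ofReal_add, ← ENNReal.ofReal_add,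
    ← ENNReal.ofReal_add]
  · exact ENNReal.ofReal_le_ofReal h
  all_goals positivity

/-- The mild equation in terms of `heatOp` and `duhamel`. -/
lemma IsMildSolution.duhamel_eq {d : ℕ} {φ : EuclideanSpace ℝ (Fin d) → ℝ}
    {u : ℝ → EuclideanSpace ℝ (Fin d) → ℝ} (hu : IsMildSolution d φ u) (t : ℝ)
    (x : EuclideanSpace ℝ (Fin d)) (ht : 0 < t) :
    ENNReal.ofReal (u t x) + duhamel (fun _ => 1) (fun s y => ENNReal.ofReal (u s y) ^ 2) t x
      = heatOp t (fun y => ENNReal.ofReal (φ y)) x := by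
  have h := hu.2.2 t x ht
  have e1 : duhamel (fun _ => 1) (fun s y => ENNReal.ofReal (u s y) ^ 2) t x
      = ∫⁻ s in Set.Ioo (0 : ℝ) t, ∫⁻ y,
          ENNReal.ofReal (heatKernel d s x y * u (t - s) y ^ 2) := by
    refine setLIntegral_congr_fun measurableSet_Ioo fun s hs => ?_
    simp only [one_mul]
    refine lintegral_congr fun y => ?_
    rw [ENNReal.ofReal_mul (heatKernel_nonneg hs.1 _ _), ENNReal.ofReal_pow (hu.2.1 _ _)]
    rfl
  have e2 : heatOp t (fun y => ENNReal.ofReal (φ y)) x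
      = ∫⁻ y, ENNReal.ofReal (heatKernel d t x y * φ y) := by
    refine lintegral_congr fun y => ?_
    rw [ENNReal.ofReal_mul (heatKernel_nonneg ht _ _)]
    rfl
  rw [e1, e2, h]

lemma IsMildSolution.le_of_le {d : ℕ} {φ : EuclideanSpace ℝ (Fin d) → ℝ}
    {u : ℝ → EuclideanSpace ℝ (Fin d) → ℝ} (hu : IsMildSolution d φ u) {C : ℝ} (hC : 0 ≤ C)
    (hφ : ∀ x, φ x ≤ C) {t : ℝ} (ht : 0 < t) (x : EuclideanSpace ℝ (Fin d)) : u t x ≤ C := by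
  rw [← ENNReal.ofReal_le_ofReal_iff hC, ← heatOp_const ht (ENNReal.ofReal C) x]
  exact (le_self_add.trans_eq (hu.duhamel_eq t x ht)).trans
    (heatOp_mono (fun y => ENNReal.ofReal_le_ofReal (hφ y)) x)

/-- The positive part `W = (u₁ - u₂)⁺` satisfies `W(t) ≤ ∫₀ᵗ K e^{-Ks} P_s W(t-s) ds` with `K = 2C`. -/
lemma mild_sub_le {d : ℕ} {C : ℝ} (hC : 0 < C)
    {φ₁ φ₂ : EuclideanSpace ℝ (Fin d) → ℝ}
    (hφ₁m : Measurable φ₁) (hφ₂m : Measurable φ₂)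
    (h₁C : ∀ x, φ₁ x ≤ C) (h₂C : ∀ x, φ₂ x ≤ C) (hle : ∀ x, φ₁ x ≤ φ₂ x)
    {u₁ u₂ : ℝ → EuclideanSpace ℝ (Fin d) → ℝ}
    (hu₁ : IsMildSolution d φ₁ u₁) (hu₂ : IsMildSolution d φ₂ u₂)
    {t : ℝ} (ht : 0 < t) (x : EuclideanSpace ℝ (Fin d)) :
    ENNReal.ofReal (u₁ t x - u₂ t x) ≤
      duhamel (fun s => ENNReal.ofReal (2 * C) * expW (2 * C) s)
        (fun s y => ENNReal.ofReal (u₁ s y - u₂ s y)) t x := by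
  set K := 2 * C with hKdef
  have hK : 0 < K := by positivity
  have hm₁ := hu₁.1
  have hm₂ := hu₂.1
  have mU₁ : Measurable (Function.uncurry fun s y => ENNReal.ofReal (u₁ s y)) := hm₁.ennreal_ofReal
  have mU₂ : Measurable (Function.uncurry fun s y => ENNReal.ofReal (u₂ s y)) := hm₂.ennreal_ofReal
  have mG₁ : Measurable (Function.uncurry fun s y => ENNReal.ofReal (u₁ s y) ^ 2) := mU₁.pow_const 2
  have mG₂ : Measurable (Function.uncurry fun s y => ENNReal.ofReal (u₂ s y) ^ 2) := mU₂.pow_const 2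
  have mW : Measurable (Function.uncurry fun s y => ENNReal.ofReal (u₁ s y - u₂ s y)) :=
    (hm₁.sub hm₂).ennreal_ofReal
  have fin : ∀ φ : EuclideanSpace ℝ (Fin d) → ℝ, (∀ x, φ x ≤ C) →
      ∀ t x, 0 < t → heatOp t (fun y => ENNReal.ofReal (φ y)) x ≠ ∞ := fun φ h t x ht =>
    ne_top_of_le_ne_top (ENNReal.ofReal_ne_top (r := C)) <| by
      rw [← heatOp_const ht (ENNReal.ofReal C) x]
      exact heatOp_mono (fun y => ENNReal.ofReal_le_ofReal (h y)) x
  have w₁ := mild_weighted hK mU₁ mG₁ hφ₁m.ennreal_ofReal (fin _ h₁C) hu₁.duhamel_eq ht x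
  have w₂ := mild_weighted hK mU₂ mG₂ hφ₂m.ennreal_ofReal (fin _ h₂C) hu₂.duhamel_eq ht x
  have finG : ∀ {φ : EuclideanSpace ℝ (Fin d) → ℝ}, (∀ x, φ x ≤ C) →
      ∀ {u : ℝ → EuclideanSpace ℝ (Fin d) → ℝ}, IsMildSolution d φ u →
      duhamel (expW K) (fun s y => ENNReal.ofReal (u s y) ^ 2) t x ≠ ∞ := by
    intro φ h u hu
    refine ne_top_of_le_ne_top (fin φ h t x ht) ?_
    rw [← hu.duhamel_eq t x ht]
    refine le_add_left (setLIntegral_mono' measurableSet_Ioo fun s hs => ?_)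
    exact mul_le_mul_left (le_self_add.trans_eq (expW_add_expCDF hK hs.1.le)) _
  have react : duhamel (fun s => ENNReal.ofReal K * expW K s) (fun s y => ENNReal.ofReal (u₁ s y)) t x
        + duhamel (expW K) (fun s y => ENNReal.ofReal (u₂ s y) ^ 2) t x
      ≤ duhamel (expW K) (fun s y => ENNReal.ofReal (u₁ s y) ^ 2) t x
        + duhamel (fun s => ENNReal.ofReal K * expW K s) (fun s y => ENNReal.ofReal (u₂ s y)) t x
        + duhamel (fun s => ENNReal.ofReal K * expW K s)
            (fun s y => ENNReal.ofReal (u₁ s y - u₂ s y)) t x := by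
    have mE := measurable_expW K
    rw [← duhamel_const_mul mU₁, ← duhamel_const_mul mU₂, ← duhamel_const_mul mW,
      ← duhamel_add mE (mU₁.const_mul _), ← duhamel_add mE mG₁,
      ← duhamel_add mE (mG₁.add (mU₂.const_mul _))]
    exact duhamel_mono (fun s hs _ y => reaction_le (hu₁.2.1 s y) (hu₂.2.1 s y)
      (hu₁.le_of_le hC.le h₁C hs y) (hu₂.le_of_le hC.le h₂C hs y)) x
  have data : expW K t * heatOp t (fun y => ENNReal.ofReal (φ₁ y)) x
      ≤ expW K t * heatOp t (fun y => ENNReal.ofReal (φ₂ y)) x :=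
    mul_le_mul_right (heatOp_mono (fun y => ENNReal.ofReal_le_ofReal (hle y)) x) _
  have f₁ := finG h₁C hu₁
  have f₂ := finG h₂C hu₂
  rw [ENNReal.ofReal_sub _ (hu₂.2.1 t x), tsub_le_iff_left]
  generalize duhamel (expW K) (fun s y => ENNReal.ofReal (u₁ s y) ^ 2) t x = A₁ at *
  generalize duhamel (expW K) (fun s y => ENNReal.ofReal (u₂ s y) ^ 2) t x = A₂ at *
  generalize duhamel (fun s => ENNReal.ofReal K * expW K s)
    (fun s y => ENNReal.ofReal (u₁ s y)) t x = B₁ at *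
  generalize duhamel (fun s => ENNReal.ofReal K * expW K s)
    (fun s y => ENNReal.ofReal (u₂ s y)) t x = B₂ at *
  generalize duhamel (fun s => ENNReal.ofReal K * expW K s)
    (fun s y => ENNReal.ofReal (u₁ s y - u₂ s y)) t x = R at *
  rw [← ENNReal.add_le_add_iff_right f₁, ← ENNReal.add_le_add_iff_right f₂]
  calc ENNReal.ofReal (u₁ t x) + A₁ + A₂
      = expW K t * heatOp t (fun y => ENNReal.ofReal (φ₁ y)) x + (B₁ + A₂) := by
        rw [w₁, add_assoc]
    _ ≤ expW K t * heatOp t (fun y => ENNReal.ofReal (φ₂ y)) x + (A₁ + B₂ + R) :=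
        add_le_add data react
    _ = (expW K t * heatOp t (fun y => ENNReal.ofReal (φ₂ y)) x + B₂) + A₁ + R := by ring
    _ = ENNReal.ofReal (u₂ t x) + R + A₁ + A₂ := by rw [← w₂]; ring

/-- comparison principle for mild solutions with ordered bounded initial data. -/
theorem stmt_4 (d : ℕ) (hd : 1 ≤ d)
    (φ₁ φ₂ : EuclideanSpace ℝ (Fin d) → ℝ)
    (hφ₁m : Measurable φ₁) (hφ₂m : Measurable φ₂)
    (hφ₁0 : ∀ x, 0 ≤ φ₁ x) (hφ₂0 : ∀ x, 0 ≤ φ₂ x)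
    (hbdd₁ : ∃ C : ℝ, ∀ x, φ₁ x ≤ C) (hbdd₂ : ∃ C : ℝ, ∀ x, φ₂ x ≤ C)
    (hle : ∀ x, φ₁ x ≤ φ₂ x)
    (u₁ u₂ : ℝ → EuclideanSpace ℝ (Fin d) → ℝ)
    (hu₁ : IsMildSolution d φ₁ u₁) (hu₂ : IsMildSolution d φ₂ u₂)
    (t : ℝ) (ht : 0 < t) (x : EuclideanSpace ℝ (Fin d)) :
    u₁ t x ≤ u₂ t x := by
  obtain ⟨C₁, h₁⟩ := hbdd₁
  obtain ⟨C₂, h₂⟩ := hbdd₂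
  set C : ℝ := max (max C₁ C₂) 1
  have hC : 0 < C := lt_of_lt_of_le one_pos (le_max_right _ _)
  have h₁C : ∀ x, φ₁ x ≤ C := fun x =>
    (h₁ x).trans ((le_max_left _ _).trans (le_max_left _ _))
  have h₂C : ∀ x, φ₂ x ≤ C := fun x =>
    (h₂ x).trans ((le_max_right _ _).trans (le_max_left _ _))
  have hK : 0 < 2 * C := by positivity
  let W : ℝ → EuclideanSpace ℝ (Fin d) → ℝ≥0∞ := fun s y => ENNReal.ofReal (u₁ s y - u₂ s y)
  -- `m` is the supremum of `(u₁ - u₂)⁺` over times in `(0, t]`.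
  let m : ℝ≥0∞ := ⨆ p : Ioc 0 t × EuclideanSpace ℝ (Fin d), W p.1 p.2
  have hWm : ∀ s, 0 < s → s ≤ t → ∀ y, W s y ≤ m := fun s h0 hs y =>
    le_iSup (fun p : Ioc 0 t × EuclideanSpace ℝ (Fin d) => W p.1 p.2) (⟨s, h0, hs⟩, y)
  have hm_fin : m ≠ ∞ := by
    refine ne_top_of_le_ne_top (ENNReal.ofReal_ne_top (r := C)) (iSup_le fun p => ?_)
    refine ENNReal.ofReal_le_ofReal ?_
    have := hu₁.le_of_le hC.le h₁C p.1.2.1 p.2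
    have := hu₂.2.1 p.1 p.2
    linarith
  have hcontr : m ≤ expCDF (2 * C) t * m := by
    refine iSup_le fun ⟨⟨s, h0, hs⟩, y⟩ => ?_
    calc W s y ≤ _ := mild_sub_le hC hφ₁m hφ₂m h₁C h₂C hle hu₁ hu₂ h0 y
      _ ≤ duhamel (fun s => ENNReal.ofReal (2 * C) * expW (2 * C) s) (fun _ _ => m) s y :=
        duhamel_mono (fun r hr hrs z => hWm r hr (hrs.le.trans hs) z) y
      _ = expCDF (2 * C) s * m := duhamel_weight_const hK m h0 y
      _ ≤ expCDF (2 * C) t * m := by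
        refine mul_le_mul_left (ENNReal.ofReal_le_ofReal ?_) _
        have : Real.exp (-(2 * C) * t) ≤ Real.exp (-(2 * C) * s) :=
          Real.exp_le_exp.2 (by nlinarith)
        linarith
  -- The contraction factor `1 - e^{-2Ct}` is strictly below `1` and `m` is finite.
  have hm0 : m = 0 := by
    have h1 : expW (2 * C) t * m + expCDF (2 * C) t * m ≤ 0 + expCDF (2 * C) t * m := by
      rw [← add_mul, expW_add_expCDF hK ht.le, one_mul, zero_add]
      exact hcontr
    have h2 := (ENNReal.add_le_add_iff_right
      (ENNReal.mul_ne_top ENNReal.ofReal_ne_top hm_fin)).1 h1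
    refine (mul_eq_zero.1 (nonpos_iff_eq_zero.1 h2)).resolve_left ?_
    exact (ENNReal.ofReal_pos.2 (Real.exp_pos _)).ne'
  have hW0 : W t x ≤ 0 := (hWm t ht le_rfl x).trans_eq hm0
  have := ENNReal.ofReal_eq_zero.1 (nonpos_iff_eq_zero.1 hW0)
  linarith
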